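/- Let $(G,c,o)$ be a rooted network: a connected, locally finite graph $G=(V,E)$ with conductances $c:E\to(0,\infty)$ and a distinguished vertex $o$; write $c_v=\sum_{z\sim v}c_{vz}$ for $v\in V$. Let $h:V\to[0,\infty)$ be a potential on it, that is, $h(o)=0$, $\Delta h(o)=1$ and $\Delta h(v)=0$ for all $v\ne o$, where $\Delta f(v)=\sum_{x\sim v}c_{vx}\,(f(x)-f(v))$. If $x\neq o$ and $x_0=o,x_1,\dots,x_\ell=x$ is a simple path from $o$ to $x$, then $$h(x)\;\le\;\prod_{i=1}^{\ell}c_{x_{i-1}x_i}^{-1}\cdot\prod_{i=1}^{\ell-1}c_{x_i}.$$ -/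

import Mathlib

/-- A rooted network: a connected, locally finite graph with positive symmetric edge
conductances (extended by `0` to pairs that are not edges) and a distinguished vertex `o`. -/
structure RootedNetwork (V : Type*) where
  G : SimpleGraph V
  locallyFinite : ∀ x : V, (G.neighborSet x).Finite
  connected : G.Connected
  c : V → V → ℝ
  c_symm : ∀ x y, c x y = c y x
  c_pos : ∀ x y, G.Adj x y → 0 < c x y
  c_eq_zero : ∀ x y, ¬ G.Adj x y → c x y = 0
  o : V

namespace RootedNetwork

/-- The finite set of neighbours of `v`. -/
noncomputable def nbrs {V : Type*} (N : RootedNetwork V) (v : V) : Finset V :=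
  (N.locallyFinite v).toFinset

/-- The vertex weight `c_v = Σ_{z ∼ v} c_{vz}`. -/
noncomputable def cv {V : Type*} (N : RootedNetwork V) (v : V) : ℝ :=
  ∑ z ∈ N.nbrs v, N.c v z

/-- The network Laplacian `Δ f (v) = Σ_{x ∼ v} c_{vx} (f(x) - f(v))`. -/
noncomputable def lap {V : Type*} (N : RootedNetwork V) (f : V → ℝ) (v : V) : ℝ :=
  ∑ x ∈ N.nbrs v, N.c v x * (f x - f v)

/-- A potential: a nonnegative function vanishing at `o`, with Laplacian `1`
at `o`, harmonic everywhere else. -/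
def IsPotential {V : Type*} (N : RootedNetwork V) (h : V → ℝ) : Prop :=
  (∀ v, 0 ≤ h v) ∧ h N.o = 0 ∧ N.lap h N.o = 1 ∧ ∀ v, v ≠ N.o → N.lap h v = 0

/-- For a walk `x_0, x_1, …, x_ℓ`, the number
`(∏_{i=1}^{ℓ} c_{x_{i-1} x_i}⁻¹) * ∏_{i=1}^{ℓ-1} c_{x_i}`. For `ℓ ≥ 1` it is the inverse of the
stationary weight `c_{x_0} p(x_0,x_1) ⋯ p(x_{ℓ-1},x_ℓ)` of the walk, `p(x,y) = c_{xy} / c_x`. -/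
noncomputable def pathWeightInv {V : Type*} (N : RootedNetwork V) {x y : V}
    (w : N.G.Walk x y) : ℝ :=
  (∏ i ∈ Finset.Icc 1 w.length, (N.c (w.getVert (i - 1)) (w.getVert i))⁻¹) *
    ∏ i ∈ Finset.Ico 1 w.length, N.cv (w.getVert i)

end RootedNetwork

namespace RootedNetwork

variable {V : Type*} (N : RootedNetwork V)

theorem mem_nbrs {v x : V} : x ∈ N.nbrs v ↔ N.G.Adj v x := by
  simp [nbrs]

theorem lap_eq_sum_sub (f : V → ℝ) (v : V) :
    N.lap f v = ∑ x ∈ N.nbrs v, N.c v x * f x - N.cv v * f v := by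
  simp only [lap, cv, mul_sub, Finset.sum_sub_distrib, Finset.sum_mul]

/-- For a nonnegative function, each edge term is bounded by the sum over the neighbours. -/
theorem c_mul_le_lap_add {f : V → ℝ} (hf : ∀ v, 0 ≤ f v) {v x : V} (hvx : N.G.Adj v x) :
    N.c v x * f x ≤ N.lap f v + N.cv v * f v := by
  rw [lap_eq_sum_sub, sub_add_cancel]
  exact Finset.single_le_sum (f := fun y => N.c v y * f y)
    (fun y hy => mul_nonneg (N.c_pos v y (N.mem_nbrs.1 hy)).le (hf y)) (N.mem_nbrs.2 hvx)

theorem cv_nonneg (v : V) : 0 ≤ N.cv v :=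
  Finset.sum_nonneg fun x hx => (N.c_pos v x (N.mem_nbrs.1 hx)).le

variable {N}

theorem IsPotential.le_inv_of_adj_root {h : V → ℝ} (hpot : N.IsPotential h) {x : V}
    (hx : N.G.Adj N.o x) : h x ≤ (N.c N.o x)⁻¹ := by
  obtain ⟨hnn, ho, hlap, -⟩ := hpot
  have := N.c_mul_le_lap_add hnn hx
  rw [hlap, ho, mul_zero, add_zero] at this
  rwa [← one_div, le_div_iff₀' (N.c_pos _ _ hx)]

theorem IsPotential.le_inv_mul_of_adj {h : V → ℝ} (hpot : N.IsPotential h) {v x : V}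
    (hv : v ≠ N.o) (hx : N.G.Adj v x) : h x ≤ (N.c v x)⁻¹ * (N.cv v * h v) := by
  obtain ⟨hnn, -, -, hlap⟩ := hpot
  have := N.c_mul_le_lap_add hnn hx
  rw [hlap v hv, zero_add] at this
  rwa [le_inv_mul_iff₀ (N.c_pos _ _ hx)]

/-- The bound at every vertex of the path other than its starting point. -/
theorem IsPotential.le_prod_getVert {h : V → ℝ} (hpot : N.IsPotential h) {x : V}
    {w : N.G.Walk N.o x} (hw : w.IsPath) {n : ℕ} (hn : 1 ≤ n) (hnl : n ≤ w.length) :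
    h (w.getVert n) ≤
      (∏ i ∈ Finset.Icc 1 n, (N.c (w.getVert (i - 1)) (w.getVert i))⁻¹) *
        ∏ i ∈ Finset.Ico 1 n, N.cv (w.getVert i) := by
  induction n, hn using Nat.le_induction with
  | base =>
    have hadj := w.adj_getVert_succ (i := 0) hnl
    rw [w.getVert_zero] at hadj
    simpa using hpot.le_inv_of_adj_root hadj
  | succ n hn ih =>
    have hadj := w.adj_getVert_succ (i := n) hnl
    have hne : w.getVert n ≠ N.o := fun he => by
      have := (hw.getVert_eq_start_iff (Nat.le_of_succ_le hnl)).1 he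
      omega
    rw [Finset.prod_Icc_succ_top (by omega), Finset.prod_Ico_succ_top hn, Nat.add_sub_cancel]
    calc h (w.getVert (n + 1))
        ≤ (N.c (w.getVert n) (w.getVert (n + 1)))⁻¹ *
            (N.cv (w.getVert n) * h (w.getVert n)) := hpot.le_inv_mul_of_adj hne hadj
      _ ≤ (N.c (w.getVert n) (w.getVert (n + 1)))⁻¹ * (N.cv (w.getVert n) *
            ((∏ i ∈ Finset.Icc 1 n, (N.c (w.getVert (i - 1)) (w.getVert i))⁻¹) *
              ∏ i ∈ Finset.Ico 1 n, N.cv (w.getVert i))) :=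
          mul_le_mul_of_nonneg_left
            (mul_le_mul_of_nonneg_left (ih (Nat.le_of_succ_le hnl)) (N.cv_nonneg _))
            (inv_nonneg.2 (N.c_pos _ _ hadj).le)
      _ = _ := by ring

end RootedNetwork

/-- For any potential `h` on a rooted network and any simple path
`o = x_0, x_1, …, x_ℓ = x` with `x ≠ o`, one has
`h(x) ≤ (∏_{i=1}^ℓ c_{x_{i-1} x_i}⁻¹) * ∏_{i=1}^{ℓ-1} c_{x_i}`. -/
theorem potential_le_pathWeightInv {V : Type*} (N : RootedNetwork V)
    (h : V → ℝ) (hpot : N.IsPotential h) (x : V) (hx : x ≠ N.o)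
    (w : N.G.Walk N.o x) (hw : w.IsPath) :
    h x ≤ N.pathWeightInv w := by
  have hpos : 1 ≤ w.length := Nat.one_le_iff_ne_zero.2 fun h0 =>
    hx (SimpleGraph.Walk.eq_of_length_eq_zero h0).symm
  simpa only [w.getVert_length, RootedNetwork.pathWeightInv] using hpot.le_prod_getVert hw hpos le_rfl
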